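/- Let X be a pseudocompact space with countable Suslin number, T a set, Y ⊆ ℝ^T a compact subspace in which the set {y ∈ Y : |supp y| ≤ ℵ₀} is dense, and let x₀ ∈ X and y₀ ∈ Y be non-isolated points. If there exists a separately continuous function f : X × Y → ℝ whose set of discontinuity points is exactly {(x₀, y₀)}, then there exist sequences (U_n)_{n=1}^∞ and (V_n)_{n=1}^∞ of nonempty open sets U_n ⊆ X and V_n ⊆ Y which converge to x₀ and y₀ respectively. -/

import Mathlib

/-- A sequence of subsets of a topological space converges to a point `x₀`
if every neighborhood of `x₀` eventually contains all the sets. -/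
def SeqConvergesTo {X : Type*} [TopologicalSpace X] (A : ℕ → Set X) (x₀ : X) : Prop :=
  ∀ U ∈ nhds x₀, ∃ n₀ : ℕ, ∀ n ≥ n₀, A n ⊆ U

/-- A function of two variables is separately continuous if all its sections in each
variable are continuous. -/
def SeparatelyContinuous {X Y : Type*} [TopologicalSpace X] [TopologicalSpace Y]
    (f : X × Y → ℝ) : Prop :=
  (∀ x, Continuous fun y => f (x, y)) ∧ (∀ y, Continuous fun x => f (x, y))

open Set Filter Metric Topology TopologicalSpace
open scoped NNReal ENNReal

/-!
Since `Y` is compact, `x ↦ f (x, ·)` is continuous into `C(Y, ℝ)` away from `x₀`; the chain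
condition on `X` makes its range separable, so countably many points of `Y` suffice to tell
`f (x₀, ·)` from the other sections. This gives a continuous map `h` from `X × Y` to a first
countable space such that `h p = h (x₀, y₀)` forces `f p = f (x₀, y₀)`. On the closure of the open
set `W = {p | ε < |f p - f (x₀, y₀)|}` the fibre of `h` through `(x₀, y₀)` is therefore that single
point, and in the feebly compact space `X × Y` the sets `h ⁻¹' B n ∩ W`, for a decreasing countable
open base `B` at `h (x₀, y₀)`, must shrink to it. The projections of these sets are the `U n` and
the `V n`.
-/

namespace SeqConvergesTo

lemma image {X Y : Type*} [TopologicalSpace X] [TopologicalSpace Y] {A : ℕ → Set X} {x₀ : X}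
    (hA : SeqConvergesTo A x₀) {g : X → Y} (hg : ContinuousAt g x₀) :
    SeqConvergesTo (fun n => g '' A n) (g x₀) := fun U hU => by
  obtain ⟨n₀, hn₀⟩ := hA _ (hg hU)
  exact ⟨n₀, fun n hn => image_subset_iff.2 (hn₀ n hn)⟩

end SeqConvergesTo

/-- Feebly compact spaces, defined by decreasing sequences of nonempty open sets. Among completely
regular spaces they are the pseudocompact ones. -/
class FeeblyCompactSpace (X : Type*) [TopologicalSpace X] : Prop where
  nonempty_iInter_closure (G : ℕ → Set X) (anti : Antitone G) (isOpen : ∀ n, IsOpen (G n))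
    (nonempty : ∀ n, (G n).Nonempty) : (⋂ n, closure (G n)).Nonempty

/-- Spaces satisfying the countable chain condition, i.e. with countable Suslin number. -/
class CountableChainSpace (X : Type*) [TopologicalSpace X] : Prop where
  countable_of_pairwise_disjoint (S : Set (Set X)) (isOpen : ∀ U ∈ S, IsOpen U)
    (nonempty : ∀ U ∈ S, U.Nonempty) (disjoint : S.Pairwise Disjoint) : S.Countable

section Pseudocompact

variable {X : Type*} [TopologicalSpace X]

lemma exists_continuous_nonneg_eq_one_support_subset [CompletelyRegularSpace X] {U : Set X}
    (hU : IsOpen U) {a : X} (ha : a ∈ U) :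
    ∃ g : X → ℝ, Continuous g ∧ 0 ≤ g ∧ g a = 1 ∧ Function.support g ⊆ U := by
  obtain ⟨g, hg, hga, hgU⟩ := CompletelyRegularSpace.completely_regular_isOpen a U hU ha
  refine ⟨fun x => 1 - (g x : ℝ), by fun_prop, fun x => sub_nonneg.2 (g x).2.2, by simp [hga], ?_⟩
  exact Function.support_subset_iff'.2 fun x hx => by simp [hgU hx]

lemma exists_continuous_unbounded_of_locallyFinite [CompletelyRegularSpace X] {A : ℕ → Set X}
    (hfin : LocallyFinite A) (hopen : ∀ n, IsOpen (A n)) (hne : ∀ n, (A n).Nonempty) :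
    ∃ g : X → ℝ, Continuous g ∧ ∀ n : ℕ, ∃ x, n ≤ g x := by
  choose a ha using hne
  choose g hgcont hgnonneg hga hgsupp using
    fun n => exists_continuous_nonneg_eq_one_support_subset (hopen n) (ha n)
  have hsupp : LocallyFinite fun n : ℕ => Function.support fun x => (n : ℝ) * g n x :=
    hfin.subset fun n => (Function.support_mul_subset_right _ _).trans (hgsupp n)
  refine ⟨fun x => ∑ᶠ n : ℕ, (n : ℝ) * g n x,
    continuous_finsum (fun n => (hgcont n).const_mul _) hsupp, fun n => ⟨a n, ?_⟩⟩
  calc (n : ℝ) = n * g n (a n) := by rw [hga, mul_one]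
    _ ≤ ∑ᶠ k : ℕ, (k : ℝ) * g k (a n) :=
      single_le_finsum n (hsupp.point_finite (a n))
        fun k => mul_nonneg k.cast_nonneg (hgnonneg k (a n))

lemma locallyFinite_of_antitone_of_iInter_closure_eq_empty {G : ℕ → Set X} (hanti : Antitone G)
    (hG : (⋂ n, closure (G n)) = ∅) : LocallyFinite G := fun x => by
  obtain ⟨m, hm⟩ : ∃ m, x ∉ closure (G m) := by
    simpa using (hG ▸ notMem_empty x : x ∉ ⋂ n, closure (G n))
  refine ⟨(closure (G m))ᶜ, isClosed_closure.isOpen_compl.mem_nhds hm,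
    (finite_lt_nat m).subset fun n ⟨y, hyn, hym⟩ => ?_⟩
  by_contra! hmn
  exact hym (subset_closure (hanti (not_lt.1 hmn) hyn))

lemma FeeblyCompactSpace.of_forall_continuous_bounded [CompletelyRegularSpace X]
    (hX : ∀ g : X → ℝ, Continuous g → ∃ M : ℝ, ∀ x, |g x| ≤ M) : FeeblyCompactSpace X where
  nonempty_iInter_closure G hanti hopen hne := by
    by_contra hempty
    obtain ⟨g, hg, hunbdd⟩ := exists_continuous_unbounded_of_locallyFinite
      (locallyFinite_of_antitone_of_iInter_closure_eq_empty hanti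
        (not_nonempty_iff_eq_empty.1 hempty)) hopen hne
    obtain ⟨M, hM⟩ := hX g hg
    obtain ⟨n, hn⟩ := exists_nat_gt M
    obtain ⟨x, hx⟩ := hunbdd n
    exact (hn.trans_le hx).not_ge ((le_abs_self _).trans (hM x))

end Pseudocompact

section FeeblyCompact

variable {X Z E : Type*} [TopologicalSpace X] [TopologicalSpace Z] [TopologicalSpace E]

lemma clusterPt_iInf_principal_iff {G : ℕ → Set X} (hanti : Antitone G) {x : X} :
    ClusterPt x (⨅ n, 𝓟 (G n)) ↔ x ∈ ⋂ n, closure (G n) := by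
  have hbasis : (⨅ n, 𝓟 (G n)).HasBasis (fun _ => True) G :=
    hasBasis_iInf_principal hanti.directed_ge
  simp [hbasis.clusterPt_iff_forall_mem_closure]

lemma FeeblyCompactSpace.of_isProperMap [FeeblyCompactSpace X] {g : Z → X} (hg : IsProperMap g)
    (hopenMap : IsOpenMap g) : FeeblyCompactSpace Z where
  nonempty_iInter_closure G hanti hopen hne := by
    have hanti' : Antitone fun n => g '' G n := fun _ _ hmn => image_mono (hanti hmn)
    obtain ⟨x, hx⟩ := nonempty_iInter_closure (fun n => g '' G n) hanti'
      (fun n => hopenMap _ (hopen n)) fun n => (hne n).image g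
    have hcluster : MapClusterPt x (⨅ n, 𝓟 (G n)) g := by
      have hdirected : Directed (· ≥ ·) fun n => 𝓟 (G n) :=
        Antitone.directed_ge fun _ _ hmn => principal_mono.2 (hanti hmn)
      rw [MapClusterPt, map_iInf_eq hdirected]
      simpa only [map_principal] using (clusterPt_iInf_principal_iff hanti').2 hx
    obtain ⟨z, -, hz⟩ := hg.clusterPt_of_mapClusterPt hcluster
    exact ⟨z, (clusterPt_iInf_principal_iff hanti).1 hz⟩

instance FeeblyCompactSpace.prod [FeeblyCompactSpace X] [CompactSpace Z] :
    FeeblyCompactSpace (X × Z) :=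
  .of_isProperMap isProperMap_fst_of_compactSpace isOpenMap_fst

variable [FeeblyCompactSpace Z] [RegularSpace Z]

lemma seqConvergesTo_of_iInter_closure_subset_singleton {G : ℕ → Set Z} (hanti : Antitone G)
    (hopen : ∀ n, IsOpen (G n)) {z₀ : Z} (hG : (⋂ n, closure (G n)) ⊆ {z₀}) :
    SeqConvergesTo G z₀ := fun N hN => by
  obtain ⟨K, hK, hKclosed, hKN⟩ := exists_mem_nhds_isClosed_subset hN
  suffices ∃ n₀, G n₀ ⊆ K from this.imp fun n₀ hn₀ n hn => (hanti hn).trans (hn₀.trans hKN)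
  by_contra! hGK
  obtain ⟨z, hz⟩ := FeeblyCompactSpace.nonempty_iInter_closure (fun n => G n \ K)
    (fun _ _ hmn => sdiff_subset_sdiff_left (hanti hmn)) (fun n => (hopen n).sdiff hKclosed)
    fun n => sdiff_nonempty.2 (hGK n)
  have hzz₀ : z = z₀ := hG (iInter_mono (fun n => closure_mono sdiff_subset) hz)
  have hzK : z ∈ closure Kᶜ := closure_mono (fun _ hy => hy.2) (mem_iInter.1 hz 0)
  rw [closure_compl, hzz₀] at hzK
  exact hzK (mem_interior_iff_mem_nhds.2 hK)

theorem exists_seqConvergesTo_of_fiber_inter_closure_subset_singleton [T2Space E]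
    [FirstCountableTopology E] {h : Z → E} (hh : Continuous h) {W : Set Z} (hW : IsOpen W) {z₀ : Z}
    (hz₀ : z₀ ∈ closure W) (hfiber : ∀ z ∈ closure W, h z = h z₀ → z = z₀) :
    ∃ G : ℕ → Set Z, (∀ n, IsOpen (G n)) ∧ (∀ n, (G n).Nonempty) ∧ SeqConvergesTo G z₀ := by
  obtain ⟨B, hB, hbasis⟩ := (nhds_basis_opens (h z₀)).exists_antitone_subbasis
  have hopen (n : ℕ) : IsOpen (h ⁻¹' B n ∩ W) := ((hB n).2.preimage hh).inter hW
  refine ⟨fun n => h ⁻¹' B n ∩ W, hopen,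
    fun n => mem_closure_iff.1 hz₀ _ ((hB n).2.preimage hh) (hB n).1,
    seqConvergesTo_of_iInter_closure_subset_singleton
      (fun _ _ hmn => inter_subset_inter_left _ (preimage_mono (hbasis.antitone hmn))) hopen
      fun z hz => ?_⟩
  rw [mem_iInter] at hz
  refine hfiber z (closure_mono inter_subset_right (hz 0)) ?_
  by_contra hne
  obtain ⟨u, v, hu, hv, hzu, hz₀v, huv⟩ := t2_separation hne
  obtain ⟨n, hn⟩ := hbasis.mem_iff.1 (hv.mem_nhds hz₀v)
  obtain ⟨w, hwu, hwB, -⟩ := mem_closure_iff.1 (hz n) _ (hu.preimage hh) hzu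
  exact huv.notMem_of_mem_left hwu (hn hwB)

variable {M : Type*} [PseudoMetricSpace M]

lemma exists_pos_mem_closure_of_not_continuousAt {f : X → M} {x₀ : X} (hf : ¬ ContinuousAt f x₀) :
    ∃ ε > 0, x₀ ∈ closure {x | ε < dist (f x) (f x₀)} := by
  contrapose! hf
  refine Metric.tendsto_nhds.2 fun ε hε => ?_
  have hfar := hf (ε / 2) (half_pos hε)
  rw [mem_closure_iff_frequently, not_frequently] at hfar
  filter_upwards [hfar] with x hx
  exact (not_lt.1 hx).trans_lt (half_lt_self hε)

theorem exists_seqConvergesTo_of_continuousAt_iff_ne [T2Space E] [FirstCountableTopology E]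
    {f : Z → M} {z₀ : Z} (hf : ∀ z, ContinuousAt f z ↔ z ≠ z₀) {h : Z → E} (hh : Continuous h)
    (hfh : ∀ z, h z = h z₀ → dist (f z) (f z₀) = 0) :
    ∃ G : ℕ → Set Z, (∀ n, IsOpen (G n)) ∧ (∀ n, (G n).Nonempty) ∧ SeqConvergesTo G z₀ := by
  obtain ⟨ε, hε, hz₀⟩ := exists_pos_mem_closure_of_not_continuousAt fun hc => (hf z₀).1 hc rfl
  have hdist {z : Z} (hz : z ≠ z₀) : ContinuousAt (fun w => dist (f w) (f z₀)) z :=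
    ((hf z).2 hz).dist continuousAt_const
  have hopen : IsOpen {z | ε < dist (f z) (f z₀)} := by
    refine isOpen_iff_mem_nhds.2 fun z hz => ?_
    have hne : z ≠ z₀ := by
      rintro rfl
      exact hε.not_gt (by simpa using hz)
    exact (hdist hne).eventually_const_lt hz
  refine exists_seqConvergesTo_of_fiber_inter_closure_subset_singleton hh hopen hz₀
    fun z hz hzz₀ => ?_
  by_contra hne
  have hle : ε ≤ dist (f z) (f z₀) := by
    by_contra! hlt
    obtain ⟨w, hfar, hnear⟩ := ((mem_closure_iff_frequently.1 hz).and_eventually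
      ((hdist hne).eventually_lt_const hlt)).exists
    exact lt_asymm hfar hnear
  exact hε.not_ge (hle.trans_eq (hfh z hzz₀))

end FeeblyCompact

section CountableChain

variable {X : Type*} [TopologicalSpace X] [CountableChainSpace X]

lemma countable_of_pairwiseDisjoint_of_isOpen {ι : Type*} {s : Set ι} {U : ι → Set X}
    (hU : s.PairwiseDisjoint U) (hopen : ∀ i ∈ s, IsOpen (U i)) (hne : ∀ i ∈ s, (U i).Nonempty) :
    s.Countable := by
  have hinj : InjOn U s := fun i hi j hj hij =>
    hU.elim hi hj fun hdisj => (hne j hj).ne_empty (disjoint_self.1 (hij ▸ hdisj))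
  refine countable_of_injective_of_countable_image hinj <|
    CountableChainSpace.countable_of_pairwise_disjoint _ (forall_mem_image.2 hopen)
      (forall_mem_image.2 hne) ?_
  exact hinj.pairwise_image.2 hU

variable {M : Type*} [PseudoEMetricSpace M]

lemma countable_of_isSeparated_image {φ : X → M} {A : Set X} (hφ : ∀ x ∈ A, ContinuousAt φ x)
    {ε : ℝ≥0} (hε : 0 < ε) {N : Set M} (hNA : N ⊆ φ '' A) (hN : IsSeparated ε N) :
    N.Countable := by
  refine countable_of_pairwiseDisjoint_of_isOpen
    (U := fun m => interior (φ ⁻¹' eball m (ε / 2))) ?_ (fun _ _ => isOpen_interior) ?_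
  · intro m hm m' hm' hne
    refine Disjoint.mono interior_subset interior_subset (Disjoint.preimage φ ?_)
    exact eball_disjoint (by simpa using (hN hm hm' hne).le)
  · intro m hm
    obtain ⟨x, hx, rfl⟩ := hNA hm
    exact ⟨x, mem_interior_iff_mem_nhds.2
      (hφ x hx (eball_mem_nhds _ (by simpa using hε.ne')))⟩

lemma exists_maximal_isSeparated_subset (s : Set M) (ε : ℝ≥0∞) :
    ∃ N, Maximal (fun N => N ⊆ s ∧ IsSeparated ε N) N := by
  refine zorn_subset {N | N ⊆ s ∧ IsSeparated ε N} fun c hc hchain =>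
    ⟨⋃₀ c, ⟨sUnion_subset fun N hN => (hc hN).1, ?_⟩, fun N hN => subset_sUnion_of_mem hN⟩
  exact (pairwise_sUnion hchain.directedOn).2 fun N hN => (hc hN).2

theorem isSeparable_image_of_continuousAt {φ : X → M} {A : Set X}
    (hφ : ∀ x ∈ A, ContinuousAt φ x) : IsSeparable (φ '' A) := by
  have hnet (ε : ℝ≥0∞) (hε : ε > 0) :
      ∃ N : Set M, N.Countable ∧ φ '' A ⊆ ⋃ m ∈ N, closedEBall m ε := by
    obtain ⟨δ, hδ, hδε⟩ := ENNReal.lt_iff_exists_nnreal_btwn.1 hε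
    obtain ⟨N, hN⟩ := exists_maximal_isSeparated_subset (φ '' A) (δ : ℝ≥0∞)
    refine ⟨N, countable_of_isSeparated_image hφ (by simpa using hδ) hN.prop.1 hN.prop.2, ?_⟩
    have hcover := isCover_iff_subset_iUnion_closedEBall.1 (IsCover.of_maximal_isSeparated hN)
    exact hcover.trans (iUnion₂_mono fun m _ => closedEBall_subset_closedEBall hδε.le)
  obtain ⟨D, -, hD, hsub⟩ := EMetric.subset_countable_closure_of_almost_dense_set (φ '' A) hnet
  exact ⟨D, hD, hsub⟩

end CountableChain

section Sections

variable {X Y : Type*} [TopologicalSpace X] [TopologicalSpace Y]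

lemma continuousAt_of_forall_continuousAt_uncurry {Z : Type*} [TopologicalSpace Z]
    {φ : X → C(Y, Z)} {x : X} (hφ : ∀ y, ContinuousAt (fun p : X × Y => φ p.1 p.2) (x, y)) :
    ContinuousAt φ x :=
  ContinuousMap.tendsto_nhds_compactOpen.2 fun _ hK _ hU hKU =>
    hK.eventually_forall_of_forall_eventually fun y hy =>
      (hφ y).eventually_mem (hU.mem_nhds (hKU hy))

theorem exists_countable_forall_eqOn_imp_eq [CompactSpace Y] {M : Type*} [MetricSpace M]
    {S : Set C(Y, M)} (hS : IsSeparable S) (g₀ : C(Y, M)) :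
    ∃ Q : Set Y, Q.Countable ∧ ∀ g ∈ S, EqOn g g₀ Q → g = g₀ := by
  obtain hY | hY := isEmpty_or_nonempty Y
  · exact ⟨∅, countable_empty, fun g _ _ => ContinuousMap.ext hY.elim⟩
  obtain ⟨D, hD, hSD⟩ := hS
  have hattained (d : C(Y, M)) : ∃ y, dist d g₀ ≤ dist (d y) (g₀ y) := by
    by_contra! hlt
    exact lt_irrefl _ (ContinuousMap.dist_lt_iff_of_nonempty.2 hlt)
  choose q hq using hattained
  refine ⟨q '' D, hD.image q, fun g hg hgQ => dist_le_zero.1 ?_⟩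
  refine le_of_forall_pos_le_add fun ε hε => ?_
  obtain ⟨d, hd, hgd⟩ := mem_closure_iff.1 (hSD hg) (ε / 2) (half_pos hε)
  calc dist g g₀ ≤ dist g d + dist d g₀ := dist_triangle _ _ _
    _ ≤ dist g d + dist (d (q d)) (g₀ (q d)) := by gcongr; exact hq d
    _ = dist g d + dist (g (q d)) (d (q d)) := by
      rw [← hgQ (mem_image_of_mem q hd), dist_comm (d _)]
    _ ≤ dist g d + dist g d := by gcongr; exact ContinuousMap.dist_apply_le_dist _
    _ ≤ 0 + ε := by linarith

lemma SeparatelyContinuous.exists_countable_eqOn_section [CountableChainSpace X] [CompactSpace Y]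
    {f : X × Y → ℝ} (hf : SeparatelyContinuous f) {x₀ : X}
    (hcont : ∀ x ≠ x₀, ∀ y, ContinuousAt f (x, y)) :
    ∃ Q : Set Y, Q.Countable ∧
      ∀ x, (∀ q ∈ Q, f (x, q) = f (x₀, q)) → ∀ y, f (x, y) = f (x₀, y) := by
  let φ : X → C(Y, ℝ) := fun x => ⟨fun y => f (x, y), hf.1 x⟩
  have hsep : IsSeparable (φ '' {x₀}ᶜ) :=
    isSeparable_image_of_continuousAt fun x hx =>
      continuousAt_of_forall_continuousAt_uncurry (hcont x hx)
  obtain ⟨Q, hQ, hdet⟩ := exists_countable_forall_eqOn_imp_eq hsep (φ x₀)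
  refine ⟨Q, hQ, fun x hx y => ?_⟩
  obtain rfl | hne := eq_or_ne x x₀
  · rfl
  · exact DFunLike.congr_fun (hdet (φ x) (mem_image_of_mem φ hne) hx) y

end Sections

theorem exists_open_seq_of_onepoint_discontinuity_suslin_pseudocompact_general {X Y : Type*}
    [TopologicalSpace X] [RegularSpace X] [FeeblyCompactSpace X] [CountableChainSpace X]
    [TopologicalSpace Y] [RegularSpace Y] [CompactSpace Y] (x₀ : X) (y₀ : Y)
    (f : X × Y → ℝ) (hf : SeparatelyContinuous f)
    (hD : {p : X × Y | ¬ ContinuousAt f p} = {(x₀, y₀)}) :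
    ∃ (U : ℕ → Set X) (V : ℕ → Set Y),
      (∀ n, IsOpen (U n)) ∧ (∀ n, (U n).Nonempty) ∧
      (∀ n, IsOpen (V n)) ∧ (∀ n, (V n).Nonempty) ∧
      SeqConvergesTo U x₀ ∧ SeqConvergesTo V y₀ := by
  have hcont (p : X × Y) : ContinuousAt f p ↔ p ≠ (x₀, y₀) := by
    simpa using not_congr (Set.ext_iff.1 hD p)
  obtain ⟨Q, hQ, hdet⟩ := hf.exists_countable_eqOn_section fun x hx y =>
    (hcont (x, y)).2 fun h => hx (congrArg Prod.fst h)
  have := hQ.to_subtype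
  let h : X × Y → (Q → ℝ) × ℝ := fun p => (fun q => f (p.1, q), f (x₀, p.2))
  have hh : Continuous h :=
    .prodMk (continuous_pi fun q => (hf.2 q).comp continuous_fst) ((hf.1 x₀).comp continuous_snd)
  have hfh (p : X × Y) (hp : h p = h (x₀, y₀)) : f p = f (x₀, y₀) := by
    obtain ⟨hQeq, hy⟩ := Prod.mk.inj hp
    exact (hdet p.1 (fun q hq => congrFun hQeq ⟨q, hq⟩) p.2).trans hy
  obtain ⟨G, hopen, hne, hG⟩ := exists_seqConvergesTo_of_continuousAt_iff_ne hcont hh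
    fun p hp => dist_eq_zero.2 (hfh p hp)
  exact ⟨fun n => Prod.fst '' G n, fun n => Prod.snd '' G n,
    fun n => isOpenMap_fst _ (hopen n), fun n => (hne n).image _,
    fun n => isOpenMap_snd _ (hopen n), fun n => (hne n).image _,
    hG.image continuousAt_fst, hG.image continuousAt_snd⟩

/-- let `X` be pseudocompact with countable Suslin number and
`Y ⊆ ℝ^T` compact with the points of at most countable support dense in `Y`, with
non-isolated points `x₀ ∈ X`, `y₀ ∈ Y`. If some separately continuous `f : X × Y → ℝ`
has discontinuity set exactly `{(x₀, y₀)}`, then there exist sequences of nonempty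
open sets converging to `x₀` and to `y₀`. -/
theorem exists_open_seq_of_onepoint_discontinuity_suslin_pseudocompact {X : Type*}
    [TopologicalSpace X] [CompletelyRegularSpace X]
    (hpc : ∀ g : X → ℝ, Continuous g → ∃ M : ℝ, ∀ x, |g x| ≤ M)
    (hSuslin : ∀ S : Set (Set X), (∀ U ∈ S, IsOpen U) → (∀ U ∈ S, U.Nonempty) →
      S.Pairwise Disjoint → S.Countable)
    {T : Type*} (Y : Set (T → ℝ)) (hYcomp : IsCompact Y)
    (hYdense : Y ⊆ closure {y | y ∈ Y ∧ {t | y t ≠ 0}.Countable})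
    (x₀ : X) (y₀ : Y) (hx₀ : ¬ IsOpen ({x₀} : Set X)) (hy₀ : ¬ IsOpen ({y₀} : Set Y))
    (f : X × Y → ℝ) (hf : SeparatelyContinuous f)
    (hD : {p : X × Y | ¬ ContinuousAt f p} = {(x₀, y₀)}) :
    ∃ (U : ℕ → Set X) (V : ℕ → Set Y),
      (∀ n, IsOpen (U n)) ∧ (∀ n, (U n).Nonempty) ∧
      (∀ n, IsOpen (V n)) ∧ (∀ n, (V n).Nonempty) ∧
      SeqConvergesTo U x₀ ∧ SeqConvergesTo V y₀ := by
  have : FeeblyCompactSpace X := .of_forall_continuous_bounded hpc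
  have : CountableChainSpace X := ⟨hSuslin⟩
  have : CompactSpace Y := isCompact_iff_compactSpace.1 hYcomp
  exact exists_open_seq_of_onepoint_discontinuity_suslin_pseudocompact_general x₀ y₀ f hf hD
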